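/- If every output variable of F(X,Y) is a unate (each yᵢ positive or negative unate in the formula obtained after substituting the constants for the previously processed unates, in order), then the corresponding constant vector is a Skolem function vector; i.e., sequential unate elimination is sound. -/

import Mathlib

/-! Given a satisfying output vector, overwrite its coordinates by those of `c` in increasing
order. When coordinate `k` is reached, the earlier ones already agree with `c`, so either it has the
right value or unateness at stage `k` says that flipping it keeps the specification true. After all
`m` stages the vector has become `c`. The converse direction is witnessed by `c`. -/

/-- Soundness of sequential unate elimination: if at every stage `i` the output
`y_i` is unate with value `c i` in the specification obtained by fixing the
earlier outputs to their already-chosen constants (i.e. flipping `y_i` from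
`¬c i` to `c i` preserves satisfaction whenever the earlier outputs agree with
`c`), then the constant vector `c` is a Skolem function vector for `F`. -/
theorem sequential_unate_elimination (n m : ℕ)
    (F : (Fin n → Bool) → (Fin m → Bool) → Bool)
    (c : Fin m → Bool)
    (hstage : ∀ (i : Fin m) (x : Fin n → Bool) (y : Fin m → Bool),
      (∀ j : Fin m, j < i → y j = c j) → y i = !(c i) →
      F x y = true → F x (Function.update y i (c i)) = true) :
    ∀ x : Fin n → Bool,
      (∃ y : Fin m → Bool, F x y = true) ↔ F x c = true := by
  intro x
  refine ⟨?_, fun h => ⟨c, h⟩⟩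
  rintro ⟨y, hy⟩
  -- Stage by stage, a satisfying output vector can be made to agree with `c` on the first
  -- `k` coordinates; at `k = m` it is `c` itself.
  have key : ∀ k ≤ m, ∃ z : Fin m → Bool, (∀ j : Fin m, j.val < k → z j = c j) ∧ F x z = true := by
    intro k
    induction k with
    | zero => exact fun _ => ⟨y, fun j hj => absurd hj (Nat.not_lt_zero _), hy⟩
    | succ k ih =>
      intro hk
      obtain ⟨z, hz, hFz⟩ := ih (by omega)
      by_cases hzk : z ⟨k, hk⟩ = c ⟨k, hk⟩
      · refine ⟨z, fun j hj => ?_, hFz⟩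
        rcases Nat.lt_succ_iff_lt_or_eq.mp hj with h | h
        · exact hz j h
        · obtain rfl : j = ⟨k, hk⟩ := Fin.ext h
          exact hzk
      · refine ⟨Function.update z ⟨k, hk⟩ (c ⟨k, hk⟩), fun j hj => ?_,
          hstage ⟨k, hk⟩ x z (fun j hj => hz j hj) (Bool.eq_not.mpr hzk) hFz⟩
        rcases Nat.lt_succ_iff_lt_or_eq.mp hj with h | h
        · rw [Function.update_of_ne (fun e => h.ne (congrArg Fin.val e))]
          exact hz j h
        · obtain rfl : j = ⟨k, hk⟩ := Fin.ext h
          exact Function.update_self ..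
  obtain ⟨z, hz, hFz⟩ := key m le_rfl
  rwa [funext fun j => hz j j.isLt] at hFz
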